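/- Let φ₁ be a GF²-sentence and let Θ be the set of pairs (τ,M) with τ an atomic 2-type for sig(φ₁) and M ∈ {0,1}. There exists a two-way alternating tree automaton (2ATA) 𝒜₁ over the alphabet Θ such that 𝒜₁ accepts a Θ-labeled tree (T,L) if and only if the structure 𝔄_{(T,L)} represented by (T,L) is a model of φ₁. -/

import Mathlib

/-! Core: relational two-variable first-order logic with equality (unary and
binary predicates only), the guarded fragment GF², structures, satisfaction,
atomic types, (bounded/delimited) guarded bisimulations, forest structures. -/

namespace GFC

inductive Var : Type
  | x
  | y
deriving DecidableEq

/-- Formulas of two-variable relational FO with equality (variables `x`, `y`). -/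
inductive Fml (U B : Type) : Type
  | uatom : U → Var → Fml U B
  | batom : B → Var → Var → Fml U B
  | eqv   : Var → Var → Fml U B
  | fls   : Fml U B
  | neg   : Fml U B → Fml U B
  | conj  : Fml U B → Fml U B → Fml U B
  | disj  : Fml U B → Fml U B → Fml U B
  | impl  : Fml U B → Fml U B → Fml U B
  | all   : Var → Fml U B → Fml U B
  | ex    : Var → Fml U B → Fml U B

namespace Fml

variable {U B : Type}

def free : Fml U B → Set Var
  | uatom _ v => {v}
  | batom _ v w => {v, w}
  | eqv v w => {v, w}
  | fls => ∅
  | neg φ => φ.free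
  | conj φ ψ => φ.free ∪ ψ.free
  | disj φ ψ => φ.free ∪ ψ.free
  | impl φ ψ => φ.free ∪ ψ.free
  | all v φ => φ.free \ {v}
  | ex v φ => φ.free \ {v}

def IsSentence (φ : Fml U B) : Prop := φ.free = ∅

def upreds : Fml U B → Set U
  | uatom P _ => {P}
  | batom _ _ _ => ∅
  | eqv _ _ => ∅
  | fls => ∅
  | neg φ => φ.upreds
  | conj φ ψ => φ.upreds ∪ ψ.upreds
  | disj φ ψ => φ.upreds ∪ ψ.upreds
  | impl φ ψ => φ.upreds ∪ ψ.upreds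
  | all _ φ => φ.upreds
  | ex _ φ => φ.upreds

def bpreds : Fml U B → Set B
  | uatom _ _ => ∅
  | batom R _ _ => {R}
  | eqv _ _ => ∅
  | fls => ∅
  | neg φ => φ.bpreds
  | conj φ ψ => φ.bpreds ∪ ψ.bpreds
  | disj φ ψ => φ.bpreds ∪ ψ.bpreds
  | impl φ ψ => φ.bpreds ∪ ψ.bpreds
  | all _ φ => φ.bpreds
  | ex _ φ => φ.bpreds

def IsAtom : Fml U B → Prop
  | uatom _ _ => True
  | batom _ _ _ => True
  | eqv _ _ => True
  | _ => False

def IsEqAtom : Fml U B → Prop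
  | eqv _ _ => True
  | _ => False

/-- guarded quantifier depth (in GF² formulas every quantifier is guarded) -/
def gdepth : Fml U B → ℕ
  | uatom _ _ => 0
  | batom _ _ _ => 0
  | eqv _ _ => 0
  | fls => 0
  | neg φ => φ.gdepth
  | conj φ ψ => max φ.gdepth ψ.gdepth
  | disj φ ψ => max φ.gdepth ψ.gdepth
  | impl φ ψ => max φ.gdepth ψ.gdepth
  | all _ φ => φ.gdepth + 1
  | ex _ φ => φ.gdepth + 1

/-- subformulas (including the formula itself) -/
def Subf : Fml U B → Set (Fml U B)
  | uatom P v => {uatom P v}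
  | batom R v w => {batom R v w}
  | eqv v w => {eqv v w}
  | fls => {fls}
  | neg φ => insert (neg φ) φ.Subf
  | conj φ ψ => insert (conj φ ψ) (φ.Subf ∪ ψ.Subf)
  | disj φ ψ => insert (disj φ ψ) (φ.Subf ∪ ψ.Subf)
  | impl φ ψ => insert (impl φ ψ) (φ.Subf ∪ ψ.Subf)
  | all v φ => insert (all v φ) φ.Subf
  | ex v φ => insert (ex v φ) φ.Subf

/-- rename the free variables along `f` (bound variables untouched) -/
def renameFree : (Var → Var) → Fml U B → Fml U B
  | f, uatom P v => uatom P (f v)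
  | f, batom R v w => batom R (f v) (f w)
  | f, eqv v w => eqv (f v) (f w)
  | _, fls => fls
  | f, neg φ => neg (renameFree f φ)
  | f, conj φ ψ => conj (renameFree f φ) (renameFree f ψ)
  | f, disj φ ψ => disj (renameFree f φ) (renameFree f ψ)
  | f, impl φ ψ => impl (renameFree f φ) (renameFree f ψ)
  | f, all v φ => all v (renameFree (Function.update f v v) φ)
  | f, ex v φ => ex v (renameFree (Function.update f v v) φ)

end Fml

/-- The two-variable guarded fragment GF²: quantification only in the guarded
patterns `∀v (α → φ)` and `∃v (α ∧ φ)` with `α` an atom containing all free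
variables of `φ` as well as the quantified variable `v`. -/
inductive IsGF2 {U B : Type} : Fml U B → Prop
  | uatom (P : U) (v : Var) : IsGF2 (.uatom P v)
  | batom (R : B) (v w : Var) : IsGF2 (.batom R v w)
  | eqv (v w : Var) : IsGF2 (.eqv v w)
  | fls : IsGF2 .fls
  | neg {φ} : IsGF2 φ → IsGF2 (.neg φ)
  | conj {φ ψ} : IsGF2 φ → IsGF2 ψ → IsGF2 (.conj φ ψ)
  | disj {φ ψ} : IsGF2 φ → IsGF2 ψ → IsGF2 (.disj φ ψ)
  | impl {φ ψ} : IsGF2 φ → IsGF2 ψ → IsGF2 (.impl φ ψ)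
  | allG {v : Var} {α φ : Fml U B} :
      α.IsAtom → IsGF2 φ → φ.free ∪ {v} ⊆ α.free → IsGF2 (.all v (.impl α φ))
  | exG {v : Var} {α φ : Fml U B} :
      α.IsAtom → IsGF2 φ → φ.free ∪ {v} ⊆ α.free → IsGF2 (.ex v (.conj α φ))

/-- openGF²: GF² formulas with exactly one free variable, in which equality is
never used as a guard and which contain no subformula that is a sentence. -/
def IsOpenGF2 {U B : Type} (φ : Fml U B) : Prop :=
  IsGF2 φ ∧ (∃ v, φ.free = {v}) ∧
  (∀ ψ ∈ φ.Subf, ¬ ψ.IsSentence) ∧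
  (∀ ψ ∈ φ.Subf, ∀ (v : Var) (α χ : Fml U B),
      (ψ = .all v (.impl α χ) ∨ ψ = .ex v (.conj α χ)) → ¬ α.IsEqAtom)

/-- relational structures interpreting unary predicates `U` and binary
predicates `B` -/
structure Str (U B : Type) where
  Dom : Type
  nonempty : Nonempty Dom
  u : U → Dom → Prop
  b : B → Dom → Dom → Prop

def upd {D : Type} (σ : Var → D) (v : Var) (d : D) : Var → D :=
  fun w => if w = v then d else σ w

def Sat {U B : Type} (A : Str U B) : Fml U B → (Var → A.Dom) → Prop
  | .uatom P v, σ => A.u P (σ v)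
  | .batom R v w, σ => A.b R (σ v) (σ w)
  | .eqv v w, σ => σ v = σ w
  | .fls, _ => False
  | .neg φ, σ => ¬ Sat A φ σ
  | .conj φ ψ, σ => Sat A φ σ ∧ Sat A ψ σ
  | .disj φ ψ, σ => Sat A φ σ ∨ Sat A ψ σ
  | .impl φ ψ, σ => Sat A φ σ → Sat A ψ σ
  | .all v φ, σ => ∀ d : A.Dom, Sat A φ (upd σ v d)
  | .ex v φ, σ => ∃ d : A.Dom, Sat A φ (upd σ v d)

/-- truth of a sentence in a structure -/
def SatS {U B : Type} (A : Str U B) (φ : Fml U B) : Prop := ∀ σ, Sat A φ σ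

def Entails {U B : Type} (φ ψ : Fml U B) : Prop :=
  ∀ A : Str U B, SatS A φ → SatS A ψ

def Satisfiable {U B : Type} (φ : Fml U B) : Prop := ∃ A : Str U B, SatS A φ

/-- a GF²(Σ)-sentence, for the signature Σ = (SU, SB) -/
def IsGF2Sentence {U B : Type} (SU : Set U) (SB : Set B) (ψ : Fml U B) : Prop :=
  IsGF2 ψ ∧ ψ.IsSentence ∧ ψ.upreds ⊆ SU ∧ ψ.bpreds ⊆ SB

/-- `φ₁ ⊨_Σ φ₂` : GF²(Σ)-entailment -/
def GF2Entails {U B : Type} (SU : Set U) (SB : Set B) (φ₁ φ₂ : Fml U B) : Prop :=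
  ∀ ψ : Fml U B, IsGF2Sentence SU SB ψ → Entails φ₂ ψ → Entails φ₁ ψ

/-- atomic formulas in the variables x, y -/
inductive Atom2 (U B : Type) : Type
  | ua : U → Var → Atom2 U B
  | ba : B → Var → Var → Atom2 U B

def vval {D : Type} (a a' : D) : Var → D
  | .x => a
  | .y => a'

def Atom2.inSig {U B : Type} (SU : Set U) (SB : Set B) : Atom2 U B → Prop
  | .ua P _ => P ∈ SU
  | .ba R _ _ => R ∈ SB

def Atom2.holds {U B : Type} (A : Str U B) (a a' : A.Dom) : Atom2 U B → Prop
  | .ua P v => A.u P (vval a a' v)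
  | .ba R v w => A.b R (vval a a' v) (vval a a' w)

def Atom2.onlyX {U B : Type} : Atom2 U B → Prop
  | .ua _ v => v = Var.x
  | .ba _ v w => v = Var.x ∧ w = Var.x

/-- the atomic 1-type of `a` for the signature `(SU, SB)` (the set of
Σ-atoms in the single variable x satisfied by `a`; this determines the set of
negated atoms as well) -/
def atp1 {U B : Type} (A : Str U B) (SU : Set U) (SB : Set B) (a : A.Dom) :
    Set (Atom2 U B) :=
  {α | α.onlyX ∧ α.inSig SU SB ∧ α.holds A a a}

/-- the atomic 2-type of `(a, a')` for the signature `(SU, SB)` (the set of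
Σ-atoms in x, y satisfied by `(a, a')`; together with `a ≠ a'` this determines
the atomic 2-type) -/
def atp2 {U B : Type} (A : Str U B) (SU : Set U) (SB : Set B) (a a' : A.Dom) :
    Set (Atom2 U B) :=
  {α | α.inSig SU SB ∧ α.holds A a a'}

/-- the atomic 2-type of `(a, a')` is guarded (contains `R x y` or `R y x`
for some binary `R ∈ SB`) -/
def Guarded2 {U B : Type} (A : Str U B) (SB : Set B) (a a' : A.Dom) : Prop :=
  ∃ R ∈ SB, A.b R a a' ∨ A.b R a' a

/-- GF²(Σ)-bisimulation between structures `A` and `Bm` -/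
structure IsBisim {U B : Type} (A Bm : Str U B) (SU : Set U) (SB : Set B)
    (Z : A.Dom → Bm.Dom → Prop) : Prop where
  atom_eq : ∀ {a b}, Z a b → atp1 A SU SB a = atp1 Bm SU SB b
  forth : ∀ {a b}, Z a b → ∀ a', a' ≠ a → Guarded2 A SB a a' →
      ∃ b', b' ≠ b ∧ atp2 A SU SB a a' = atp2 Bm SU SB b b' ∧ Z a' b'
  back : ∀ {a b}, Z a b → ∀ b', b' ≠ b → Guarded2 Bm SB b b' →
      ∃ a', a' ≠ a ∧ atp2 A SU SB a a' = atp2 Bm SU SB b b' ∧ Z a' b'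

/-- `(A, a) ∼_Σ (Bm, b)` -/
def Bisim {U B : Type} (A Bm : Str U B) (SU : Set U) (SB : Set B)
    (a : A.Dom) (b : Bm.Dom) : Prop :=
  ∃ Z, IsBisim A Bm SU SB Z ∧ Z a b

/-- `(A, a) ∼ᵏ_Σ (Bm, b)` : k-GF²(Σ)-bisimilarity -/
def KBisim {U B : Type} (A Bm : Str U B) (SU : Set U) (SB : Set B) :
    ℕ → A.Dom → Bm.Dom → Prop
  | 0, a, b => atp1 A SU SB a = atp1 Bm SU SB b
  | k+1, a, b => atp1 A SU SB a = atp1 Bm SU SB b ∧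
      (∀ a', a' ≠ a → Guarded2 A SB a a' →
        ∃ b', b' ≠ b ∧ atp2 A SU SB a a' = atp2 Bm SU SB b b' ∧
          KBisim A Bm SU SB k a' b') ∧
      (∀ b', b' ≠ b → Guarded2 Bm SB b b' →
        ∃ a', a' ≠ a ∧ atp2 A SU SB a a' = atp2 Bm SU SB b b' ∧
          KBisim A Bm SU SB k a' b')

/-- a (full-signature) atomic 2-type, given as its set of positive atoms,
is guarded -/
def Guarded2Type {U B : Type} (τ : Set (Atom2 U B)) : Prop :=
  ∃ R : B, Atom2.ba R Var.x Var.y ∈ τ ∨ Atom2.ba R Var.y Var.x ∈ τ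

/-- successor-saturated structures -/
def SuccSaturated {U B : Type} (A : Str U B) : Prop :=
  ∀ (a : A.Dom) (τ : Set (Atom2 U B)) (Γ : Set (Fml U B)),
    Guarded2Type τ →
    (∀ ψ ∈ Γ, IsOpenGF2 ψ ∧ ψ.free = {Var.x}) →
    (∀ Γ' : Finset (Fml U B), ↑Γ' ⊆ Γ →
      ∃ a', a' ≠ a ∧ atp2 A Set.univ Set.univ a a' = τ ∧
        ∀ ψ ∈ Γ', Sat A ψ (fun _ => a')) →
    ∃ b', b' ≠ a ∧ atp2 A Set.univ Set.univ a b' = τ ∧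
      ∀ ψ ∈ Γ, Sat A ψ (fun _ => b')

/-- finite outdegree: every element stands in a guarded atomic 2-type (for the
full signature) to only finitely many elements -/
def FiniteOutdeg {U B : Type} (A : Str U B) : Prop :=
  ∀ a : A.Dom, {a' | a' ≠ a ∧ ∃ R : B, A.b R a a' ∨ A.b R a' a}.Finite

/-- Σ-adjacency (edges of the Gaifman graph of the Σ-reduct) -/
def SigAdj {U B : Type} (A : Str U B) (SB : Set B) (a a' : A.Dom) : Prop :=
  a ≠ a' ∧ ∃ R ∈ SB, A.b R a a' ∨ A.b R a' a

/-- A forest structure: a structure whose Gaifman graph is a forest, directed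
by choosing a root for each tree; `parent p c` says that `p` is the
predecessor (parent) of `c`. -/
structure Forest (U B : Type) extends Str U B where
  parent : Dom → Dom → Prop
  parent_unique : ∀ {c p p' : Dom}, parent p c → parent p' c → p = p'
  parent_wf : WellFounded parent
  adj_iff : ∀ a a' : Dom,
    (a ≠ a' ∧ ∃ R : B, b R a a' ∨ b R a' a) ↔ (parent a a' ∨ parent a' a)

namespace Forest

variable {U B : Type}

/-- `a` together with its descendants -/
def desc (F : Forest U B) (a : F.Dom) : Set F.Dom :=
  {c | Relation.ReflTransGen F.parent a c}

/-- the subtrees rooted at `a` and at `a'` are isomorphic -/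
def SubtreeIso (F : Forest U B) (a a' : F.Dom) : Prop :=
  ∃ f : (F.desc a) ≃ (F.desc a'),
    (f ⟨a, Relation.ReflTransGen.refl⟩).val = a' ∧
    (∀ c d : F.desc a, F.parent c.val d.val ↔ F.parent (f c).val (f d).val) ∧
    (∀ (P : U) (c : F.desc a), F.u P c.val ↔ F.u P (f c).val) ∧
    (∀ (R : B) (c d : F.desc a), F.b R c.val d.val ↔ F.b R (f c).val (f d).val)

/-- regular: only finitely many subtrees up to isomorphism -/
def Regular (F : Forest U B) : Prop :=
  ∃ S : Set F.Dom, S.Finite ∧ ∀ a, ∃ a' ∈ S, F.SubtreeIso a' a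

/-- `a ≺ a'` : `a` and `a'` lie in the same Σ-tree and `a` is a proper
ancestor of `a'` -/
def prec (F : Forest U B) (SB : Set B) (a a' : F.Dom) : Prop :=
  Relation.ReflTransGen (SigAdj F.toStr SB) a a' ∧ Relation.TransGen F.parent a a'

end Forest

/-- `a_⊥`-delimited GF²(Σ)-bisimulation: like a GF²(Σ)-bisimulation except that
the back-and-forth conditions are not required at pairs whose first component
is `abot` -/
structure IsPtDelimBisim {U B : Type} (A Bm : Str U B) (SU : Set U) (SB : Set B)
    (abot : A.Dom) (Z : A.Dom → Bm.Dom → Prop) : Prop where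
  atom_eq : ∀ {a b}, Z a b → atp1 A SU SB a = atp1 Bm SU SB b
  forth : ∀ {a b}, Z a b → a ≠ abot → ∀ a', a' ≠ a → Guarded2 A SB a a' →
      ∃ b', b' ≠ b ∧ atp2 A SU SB a a' = atp2 Bm SU SB b b' ∧ Z a' b'
  back : ∀ {a b}, Z a b → a ≠ abot → ∀ b', b' ≠ b → Guarded2 Bm SB b b' →
      ∃ a', a' ≠ a ∧ atp2 A SU SB a a' = atp2 Bm SU SB b b' ∧ Z a' b'

/-- `(A, a) ∼^{a_⊥}_Σ (Bm, b)` -/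
def PtDelimBisim {U B : Type} (A Bm : Str U B) (SU : Set U) (SB : Set B)
    (abot : A.Dom) (a : A.Dom) (b : Bm.Dom) : Prop :=
  ∃ Z, IsPtDelimBisim A Bm SU SB abot Z ∧ Z a b

/-- `A_⊥`-delimited GF²(Σ)-bisimulation between a forest structure `F` and a
structure `Bm`, given by a pair of relations `Z0 (∼⁰)` and `Z1 (∼¹)`. -/
structure IsDelimBisim {U B : Type} (F : Forest U B) (Bm : Str U B)
    (SU : Set U) (SB : Set B) (Abot : Set F.Dom)
    (Z0 Z1 : F.Dom → Bm.Dom → Prop) : Prop where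
  zero : ∀ {a b}, Z0 a b →
    atp1 F.toStr SU SB a = atp1 Bm SU SB b ∧
    (∀ a', a' ≠ a → Guarded2 F.toStr SB a a' →
      ∃ b', b' ≠ b ∧
        ((F.parent a' a ∧ a' ∈ Abot) → Z1 a' b') ∧
        (¬ (F.parent a' a ∧ a' ∈ Abot) → Z0 a' b')) ∧
    (∀ b', b' ≠ b → Guarded2 Bm SB b b' →
      ∃ a', a' ≠ a ∧
        ((F.parent a' a ∧ a' ∈ Abot) → Z1 a' b') ∧
        (¬ (F.parent a' a ∧ a' ∈ Abot) → Z0 a' b'))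
  one : ∀ {a b}, Z1 a b → (∀ p, F.parent p a → p ∉ Abot) →
    atp1 F.toStr SU SB a = atp1 Bm SU SB b ∧
    (∀ a', a' ≠ a → Guarded2 F.toStr SB a a' →
      ∃ b', b' ≠ b ∧
        ((F.parent a a' ∧ a ∈ Abot) → Z0 a' b') ∧
        (¬ (F.parent a a' ∧ a ∈ Abot) → Z1 a' b')) ∧
    (∀ b', b' ≠ b → Guarded2 Bm SB b b' →
      ∃ a', a' ≠ a ∧
        ((F.parent a a' ∧ a ∈ Abot) → Z0 a' b') ∧
        (¬ (F.parent a a' ∧ a ∈ Abot) → Z1 a' b'))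

/-- `(F, a) ∼^{A_⊥}_Σ (Bm, b)` -/
def DelimBisim {U B : Type} (F : Forest U B) (Bm : Str U B)
    (SU : Set U) (SB : Set B) (Abot : Set F.Dom) (a : F.Dom) (b : Bm.Dom) : Prop :=
  ∃ Z0 Z1, IsDelimBisim F Bm SU SB Abot Z0 Z1 ∧ Z0 a b

/-- `cl φ` : the subformulas of `φ` closed under single negation and renaming
of free variables (among x, y) -/
def clSet {U B : Type} (φ : Fml U B) : Set (Fml U B) :=
  {χ | ∃ ψ ∈ φ.Subf, ∃ f : Var → Var,
      χ = ψ.renameFree f ∨ χ = .neg (ψ.renameFree f)}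

/-- a 1-type for `φ₂`: a set of formulas `ψ(x)` from `cl φ₂` such that
`φ₂ ∧ ∃x ⋀ t(x)` is satisfiable -/
def OneType {U B : Type} (φ₂ : Fml U B) (t : Set (Fml U B)) : Prop :=
  t ⊆ clSet φ₂ ∧ (∀ ψ ∈ t, ψ.free ⊆ {Var.x}) ∧
  ∃ (A : Str U B) (a : A.Dom), SatS A φ₂ ∧ ∀ ψ ∈ t, Sat A ψ (fun _ => a)

/-- `tp_Bm(b)` : the 1-type of `b` in `Bm` (w.r.t. `φ₂`) -/
def tpOf {U B : Type} (Bm : Str U B) (φ₂ : Fml U B) (b : Bm.Dom) :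
    Set (Fml U B) :=
  {ψ | ψ ∈ clSet φ₂ ∧ ψ.free ⊆ {Var.x} ∧ Sat Bm ψ (fun _ => b)}

end GFC

/-! Core: two-way alternating parity tree automata (2ATAs) on finitely
branching labeled trees. -/

namespace TA

/-- nodes: words over `ℕ ∖ {0}`; the successors of `w` are the `w ++ [i]` -/
abbrev Node : Type := List ℕ+

/-- a tree: a nonempty, prefix-closed, finitely branching set of nodes -/
def IsTree (T : Set Node) : Prop :=
  T.Nonempty ∧ (∀ w ∈ T, ∀ v : Node, v <+: w → v ∈ T) ∧
    ∀ w ∈ T, {i : ℕ+ | w ++ [i] ∈ T}.Finite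

/-- positive Boolean formulas over `α` -/
inductive PosBool (α : Type) : Type
  | tt
  | ff
  | var (a : α)
  | and (f g : PosBool α)
  | or (f g : PosBool α)

def PosBool.eval {α : Type} (v : α → Prop) : PosBool α → Prop
  | .tt => True
  | .ff => False
  | .var a => v a
  | .and f g => f.eval v ∧ g.eval v
  | .or f g => f.eval v ∨ g.eval v

/-- the transitions of a 2ATA: `q` (stay), `⟨−⟩q` (predecessor, required to
exist), `[−]q` (predecessor, if it exists), `◇q` (some successor),
`□q` (every successor) -/
inductive Move (Q : Type) : Type
  | here (q : Q)
  | up (q : Q)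
  | upOpt (q : Q)
  | dia (q : Q)
  | box (q : Q)

/-- a two-way alternating tree automaton (2ATA); the state set `Q` is assumed
finite where relevant -/
structure ATA (Q Θ : Type) where
  init : Q
  δ : Q → Θ → PosBool (Move Q)
  prio : Q → ℕ

/-- a run of the 2ATA `A` on the `Θ`-labeled tree `(T, Lab)`: a
`(T × Q)`-labeled tree `(Tr, r)` -/
structure IsRun {Q Θ : Type} (A : ATA Q Θ) (T : Set Node) (Lab : Node → Θ)
    (Tr : Set Node) (r : Node → Node × Q) : Prop where
  tree : IsTree Tr
  root : r [] = ([], A.init)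
  inT : ∀ y ∈ Tr, (r y).1 ∈ T
  step : ∀ y ∈ Tr, ∃ v : Move Q → Prop,
    (A.δ (r y).2 (Lab (r y).1)).eval v ∧
    (∀ p, v (.here p) →
      ∃ i : ℕ+, y ++ [i] ∈ Tr ∧ r (y ++ [i]) = ((r y).1, p)) ∧
    (∀ p, v (.up p) → (r y).1 ≠ [] ∧
      ∃ i : ℕ+, y ++ [i] ∈ Tr ∧ r (y ++ [i]) = ((r y).1.dropLast, p)) ∧
    (∀ p, v (.upOpt p) → (r y).1 = [] ∨
      ∃ i : ℕ+, y ++ [i] ∈ Tr ∧ r (y ++ [i]) = ((r y).1.dropLast, p)) ∧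
    (∀ p, v (.dia p) → ∃ j : ℕ+, (r y).1 ++ [j] ∈ T ∧
      ∃ i : ℕ+, y ++ [i] ∈ Tr ∧ r (y ++ [i]) = ((r y).1 ++ [j], p)) ∧
    (∀ p, v (.box p) → ∀ j : ℕ+, (r y).1 ++ [j] ∈ T →
      ∃ i : ℕ+, y ++ [i] ∈ Tr ∧ r (y ++ [i]) = ((r y).1 ++ [j], p))

/-- an infinite path through the run tree, starting at its root -/
def IsRunPath (Tr : Set Node) (π : ℕ → Node) : Prop :=
  π 0 = [] ∧ ∀ n, π (n + 1) ∈ Tr ∧ ∃ i : ℕ+, π (n + 1) = π n ++ [i]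

/-- the parity condition: the largest priority occurring infinitely often
along the sequence of states is even -/
def ParityAcc {Q : Type} (prio : Q → ℕ) (qs : ℕ → Q) : Prop :=
  ∃ m : ℕ, Even m ∧ {j | prio (qs j) = m}.Infinite ∧
    ∀ m', m < m' → {j | prio (qs j) = m'}.Finite

/-- the 2ATA `A` accepts the `Θ`-labeled tree `(T, Lab)` -/
def Accepts {Q Θ : Type} (A : ATA Q Θ) (T : Set Node) (Lab : Node → Θ) : Prop :=
  ∃ (Tr : Set Node) (r : Node → Node × Q), IsRun A T Lab Tr r ∧
    ∀ π : ℕ → Node, IsRunPath Tr π → ParityAcc A.prio (fun n => (r (π n)).2)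

/-- `(T, Lab) ∈ L(A)` -/
def InLang {Q Θ : Type} (A : ATA Q Θ) (T : Set Node) (Lab : Node → Θ) : Prop :=
  IsTree T ∧ Accepts A T Lab

/-- `w·i` for `i ∈ ℤ` : `w·0 = w`, `w·(−1)` is the predecessor of `w`
(undefined at the root), `w·i = w ++ [i]` for `i ≥ 1` -/
def moveZ (x : Node) (i : ℤ) : Option Node :=
  if i = 0 then some x
  else if i = -1 then (if x = [] then none else some x.dropLast)
  else if h : 0 < i then some (x ++ [⟨i.toNat, by omega⟩]) else none

end TA

namespace GFC

open TA

/-- the alphabet `Θ`: pairs `(τ, M)` with `τ` an atomic 2-type for the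
signature `(SU, SB)` (represented by its set of positive atoms, all of which
must use predicates from the signature; together with `¬(x=y)` this determines
a maximal satisfiable set of literals) and `M ∈ {0,1}` -/
def TypeAlph (U B : Type) (SU : Set U) (SB : Set B) : Type :=
  {τ : Set (Atom2 U B) // ∀ α ∈ τ, α.inSig SU SB} × Bool

/-- the structure `𝔄_{(T,L)}` represented by a `Θ`-labeled tree `(T, L)`:
the universe is `T`; `w` satisfies a unary `A` iff `Ay ∈ L(w)¹`; `(w,w') ∈ R`
iff (1) `w = w'` and `Ryy ∈ L(w)¹`, or (2) `w'` is a successor of `w` and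
`Rxy ∈ L(w')¹`, or (3) `w` is a successor of `w'` and `Ryx ∈ L(w)¹`. -/
def mkStr {U B : Type} (SU : Set U) (SB : Set B) (T : Set TA.Node)
    (hT : TA.IsTree T) (Lab : TA.Node → TypeAlph U B SU SB) : Str U B where
  Dom := {w : TA.Node // w ∈ T}
  nonempty := by
    obtain ⟨w, hw⟩ := hT.1
    exact ⟨⟨w, hw⟩⟩
  u := fun P w => Atom2.ua P Var.y ∈ (Lab w.val).1.val
  b := fun R w w' =>
    (w = w' ∧ Atom2.ba R Var.y Var.y ∈ (Lab w.val).1.val) ∨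
    ((∃ i : ℕ+, w'.val = w.val ++ [i]) ∧
        Atom2.ba R Var.x Var.y ∈ (Lab w'.val).1.val) ∨
    ((∃ i : ℕ+, w.val = w'.val ++ [i]) ∧
        Atom2.ba R Var.y Var.x ∈ (Lab w.val).1.val)

/-! A small two-way modal logic with global modalities, used as an intermediate step. -/

inductive TF (Θ : Type) : Type
  | lit (p : Θ → Prop)
  | cj (a b : TF Θ)
  | dj (a b : TF Θ)
  | up (a : TF Θ)
  | upo (a : TF Θ)
  | dia (a : TF Θ)
  | box (a : TF Θ)
  | ev (a : TF Θ)
  | al (a : TF Θ)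

namespace TF

variable {Θ : Type}

def sem (T : Set Node) (Lab : Node → Θ) : TF Θ → Node → Prop
  | lit p, w => p (Lab w)
  | cj a b, w => a.sem T Lab w ∧ b.sem T Lab w
  | dj a b, w => a.sem T Lab w ∨ b.sem T Lab w
  | up a, w => w ≠ [] ∧ a.sem T Lab w.dropLast
  | upo a, w => w = [] ∨ a.sem T Lab w.dropLast
  | dia a, w => ∃ j : ℕ+, w ++ [j] ∈ T ∧ a.sem T Lab (w ++ [j])
  | box a, w => ∀ j : ℕ+, w ++ [j] ∈ T → a.sem T Lab (w ++ [j])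
  | ev a, _ => ∃ d ∈ T, a.sem T Lab d
  | al a, _ => ∀ d ∈ T, a.sem T Lab d

def dual : TF Θ → TF Θ
  | lit p => lit (fun t => ¬ p t)
  | cj a b => dj a.dual b.dual
  | dj a b => cj a.dual b.dual
  | up a => upo a.dual
  | upo a => up a.dual
  | dia a => box a.dual
  | box a => dia a.dual
  | ev a => al a.dual
  | al a => ev a.dual

theorem sem_dual (T : Set Node) (Lab : Node → Θ) (a : TF Θ) :
    ∀ w, a.dual.sem T Lab w ↔ ¬ a.sem T Lab w := by
  induction a with
  | lit p => intro w; simp [dual, sem]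
  | cj a b iha ihb => intro w; simp only [dual, sem, iha, ihb]; tauto
  | dj a b iha ihb => intro w; simp only [dual, sem, iha, ihb]; tauto
  | up a ih => intro w; simp only [dual, sem, ih]; tauto
  | upo a ih => intro w; simp only [dual, sem, ih]; tauto
  | dia a ih => intro w; simp only [dual, sem, ih]; push Not; rfl
  | box a ih => intro w; simp only [dual, sem, ih]; push Not; rfl
  | ev a ih => intro w; simp only [dual, sem, ih]; push Not; rfl
  | al a ih => intro w; simp only [dual, sem, ih]; push Not; rfl

def sub : TF Θ → Set (TF Θ)
  | lit p => {lit p}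
  | cj a b => insert (cj a b) (a.sub ∪ b.sub)
  | dj a b => insert (dj a b) (a.sub ∪ b.sub)
  | up a => insert (up a) a.sub
  | upo a => insert (upo a) a.sub
  | dia a => insert (dia a) a.sub
  | box a => insert (box a) a.sub
  | ev a => insert (ev a) a.sub
  | al a => insert (al a) a.sub

theorem sub_finite (a : TF Θ) : a.sub.Finite := by
  induction a with
  | lit p => exact Set.finite_singleton _
  | cj a b iha ihb => exact (iha.union ihb).insert _
  | dj a b iha ihb => exact (iha.union ihb).insert _
  | up a ih => exact ih.insert _
  | upo a ih => exact ih.insert _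
  | dia a ih => exact ih.insert _
  | box a ih => exact ih.insert _
  | ev a ih => exact ih.insert _
  | al a ih => exact ih.insert _

theorem self_mem (a : TF Θ) : a ∈ a.sub := by
  cases a <;> simp [sub]

theorem sub_trans {c : TF Θ} (a : TF Θ) (h : c ∈ a.sub) : c.sub ⊆ a.sub := by
  induction a with
  | lit p =>
    simp only [sub, Set.mem_singleton_iff] at h
    subst h; exact subset_rfl
  | cj a b iha ihb =>
    simp only [sub, Set.mem_insert_iff, Set.mem_union] at h
    rcases h with rfl | h | h
    · exact subset_rfl
    · exact (iha h).trans (fun _ hx => Or.inr (Or.inl hx))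
    · exact (ihb h).trans (fun _ hx => Or.inr (Or.inr hx))
  | dj a b iha ihb =>
    simp only [sub, Set.mem_insert_iff, Set.mem_union] at h
    rcases h with rfl | h | h
    · exact subset_rfl
    · exact (iha h).trans (fun _ hx => Or.inr (Or.inl hx))
    · exact (ihb h).trans (fun _ hx => Or.inr (Or.inr hx))
  | up a ih | upo a ih | dia a ih | box a ih | ev a ih | al a ih =>
    simp only [sub, Set.mem_insert_iff] at h
    rcases h with rfl | h
    · exact subset_rfl
    · exact (ih h).trans (fun _ hx => Or.inr hx)

abbrev St (z : TF Θ) : Type := {c : TF Θ // c ∈ z.sub}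

open Classical in
noncomputable def cst (z : TF Θ) (c : TF Θ) : St z :=
  if h : c ∈ z.sub then ⟨c, h⟩ else ⟨z, z.self_mem⟩

theorem cst_eq {z c : TF Θ} (h : c ∈ z.sub) : cst z c = ⟨c, h⟩ := by
  simp [cst, h]

open Classical in
noncomputable def dl (z : TF Θ) : TF Θ → Θ → PosBool (Move (St z))
  | lit p, t => if p t then .tt else .ff
  | cj a b, _ => .and (.var (.here (cst z a))) (.var (.here (cst z b)))
  | dj a b, _ => .or (.var (.here (cst z a))) (.var (.here (cst z b)))
  | up a, _ => .var (.up (cst z a))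
  | upo a, _ => .var (.upOpt (cst z a))
  | dia a, _ => .var (.dia (cst z a))
  | box a, _ => .var (.box (cst z a))
  | ev a, _ => .or (.var (.here (cst z a)))
      (.or (.var (.up (cst z (ev a)))) (.var (.dia (cst z (ev a)))))
  | al a, _ => .and (.var (.here (cst z a)))
      (.and (.var (.upOpt (cst z (al a)))) (.var (.box (cst z (al a)))))

def pr : TF Θ → ℕ
  | ev _ => 1
  | _ => 0

noncomputable def aut (z : TF Θ) : ATA (St z) Θ where
  init := ⟨z, z.self_mem⟩
  δ := fun q t => dl z q.1 t
  prio := fun q => pr q.1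

end TF

def vof {Q : Type} (T : Set Node) (w : Node) (S : Set (Node × Q)) : Move Q → Prop
  | .here p => (w, p) ∈ S
  | .up p => w ≠ [] ∧ (w.dropLast, p) ∈ S
  | .upOpt p => w = [] ∨ (w.dropLast, p) ∈ S
  | .dia p => ∃ j : ℕ+, w ++ [j] ∈ T ∧ (w ++ [j], p) ∈ S
  | .box p => ∀ j : ℕ+, w ++ [j] ∈ T → (w ++ [j], p) ∈ S

theorem eval_mono {α : Type} {v v' : α → Prop} (h : ∀ a, v a → v' a) (f : PosBool α) :
    f.eval v → f.eval v' := by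
  induction f with
  | tt => exact id
  | ff => exact id
  | var a => exact h a
  | and f g hf hg => exact fun ⟨a, b⟩ => ⟨hf a, hg b⟩
  | or f g hf hg => exact fun hh => hh.elim (fun a => Or.inl (hf a)) (fun a => Or.inr (hg a))

/-- connectivity of trees -/
theorem tree_conn {T : Set Node} (hT : IsTree T) (P : Node → Prop) {w0 : Node}
    (hw0 : w0 ∈ T) (h0 : P w0)
    (hup : ∀ w, ∀ i : ℕ+, w ++ [i] ∈ T → P (w ++ [i]) → P w)
    (hdn : ∀ w, ∀ i : ℕ+, w ++ [i] ∈ T → P w → P (w ++ [i])) : ∀ d ∈ T, P d := by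
  have hroot : P [] := by
    induction w0 using List.reverseRecOn with
    | nil => exact h0
    | append_singleton l a ih =>
      exact ih (hT.2.1 _ hw0 _ (List.prefix_append _ _)) (hup _ _ hw0 h0)
  intro d
  induction d using List.reverseRecOn with
  | nil => exact fun _ => hroot
  | append_singleton l a ih =>
    intro hd
    exact hdn _ _ hd (ih (hT.2.1 _ hd _ (List.prefix_append _ _)))

/-- unfolding of a successor function into a run tree -/
theorem build_run {Pos : Type} (succ : Pos → List Pos) (start : Pos) :
    ∃ (Tr : Set Node) (r : Node → Pos), IsTree Tr ∧ r [] = start ∧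
      (∀ y ∈ Tr, ∀ p ∈ succ (r y), ∃ i : ℕ+, y ++ [i] ∈ Tr ∧ r (y ++ [i]) = p) ∧
      (∀ y, ∀ i : ℕ+, y ++ [i] ∈ Tr → y ∈ Tr ∧ r (y ++ [i]) ∈ succ (r y)) := by
  let f : Node → Option Pos := fun y =>
    y.foldl (fun (o : Option Pos) (i : ℕ+) => o.bind fun p => (succ p)[(i : ℕ) - 1]?) (some start)
  have f0 : f [] = some start := rfl
  have fs : ∀ y (i : ℕ+), f (y ++ [i]) = (f y).bind fun p => (succ p)[(i : ℕ) - 1]? := by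
    intro y i
    simp [f, List.foldl_append]
  have key : ∀ y (i : ℕ+) p', f (y ++ [i]) = some p' →
      ∃ p, f y = some p ∧ (succ p)[(i : ℕ) - 1]? = some p' := by
    intro y i p' h
    rw [fs] at h
    exact Option.bind_eq_some_iff.1 h
  refine ⟨{y | ∃ p, f y = some p}, fun y => (f y).getD start, ⟨⟨[], start, f0⟩, ?_, ?_⟩, ?_, ?_, ?_⟩
  · intro w
    induction w using List.reverseRecOn with
    | nil =>
      intro hw v hv
      rw [List.prefix_nil.1 hv]; exact hw
    | append_singleton l a ih =>
      rintro ⟨p, hp⟩ v hv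
      obtain ⟨p', hp', _⟩ := key _ _ _ hp
      rcases List.prefix_concat_iff.1 hv with h | h
      · rw [h]; exact ⟨p, hp⟩
      · exact ih ⟨p', hp'⟩ v h
  · rintro w ⟨p, hp⟩
    have : {i : ℕ+ | w ++ [i] ∈ {y | ∃ p, f y = some p}} ⊆
        (fun i : ℕ+ => (i : ℕ)) ⁻¹' (Set.Iic (succ p).length) := by
      rintro i ⟨p', hp'⟩
      obtain ⟨p2, h2, h3⟩ := key _ _ _ hp'
      rw [hp] at h2
      cases h2
      have := (List.getElem?_eq_some_iff.1 h3).1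
      simp only [Set.mem_preimage, Set.mem_Iic]
      omega
    exact ((Set.finite_Iic _).preimage (PNat.coe_injective.injOn)).subset this
  · simp [f0]
  · rintro y ⟨p, hp⟩ p' hp'
    simp only [hp, Option.getD_some] at hp'
    obtain ⟨n, hn, he⟩ := List.mem_iff_getElem.1 hp'
    obtain ⟨i, hi⟩ : ∃ i : ℕ+, (i : ℕ) = n + 1 := ⟨Nat.succPNat n, rfl⟩
    have hh : f (y ++ [i]) = some p' := by
      rw [fs, hp]
      simp [← he, hi]
    exact ⟨i, ⟨p', hh⟩, by simp only [hh, Option.getD_some]⟩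
  · rintro y i ⟨p', hp'⟩
    obtain ⟨p, hp, h3⟩ := key _ _ _ hp'
    refine ⟨⟨p, hp⟩, ?_⟩
    simp only [hp, hp', Option.getD_some]
    exact List.mem_of_getElem? h3

namespace TF

variable {Θ : Type}

/-- the node `w` has a node satisfying `a` at distance `n` (along the tree edges) -/
def dst (T : Set Node) (Lab : Node → Θ) (a : TF Θ) : ℕ → Node → Prop
  | 0, w => a.sem T Lab w
  | n + 1, w => (w ≠ [] ∧ dst T Lab a n w.dropLast) ∨
      ∃ j : ℕ+, w ++ [j] ∈ T ∧ dst T Lab a n (w ++ [j])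

noncomputable def rk (T : Set Node) (Lab : Node → Θ) (a : TF Θ) (w : Node) : ℕ :=
  sInf {n | dst T Lab a n w}

theorem ev_step {T : Set Node} (hT : IsTree T) (Lab : Node → Θ) (a : TF Θ) {w : Node}
    (hw : w ∈ T) (h : (ev a).sem T Lab w) :
    a.sem T Lab w ∨ (w ≠ [] ∧ rk T Lab a w.dropLast < rk T Lab a w) ∨
      ∃ j : ℕ+, w ++ [j] ∈ T ∧ rk T Lab a (w ++ [j]) < rk T Lab a w := by
  obtain ⟨d, hd, hs⟩ := h
  have hex : ∃ n, dst T Lab a n w := by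
    refine tree_conn hT (fun w => ∃ n, dst T Lab a n w) hd ⟨0, hs⟩ ?_ ?_ w hw
    · rintro w i hi ⟨n, hn⟩
      exact ⟨n + 1, Or.inr ⟨i, hi, hn⟩⟩
    · rintro w i hi ⟨n, hn⟩
      exact ⟨n + 1, Or.inl ⟨by simp, by simpa using hn⟩⟩
  have hm : dst T Lab a (rk T Lab a w) w := Nat.sInf_mem (s := {n | dst T Lab a n w}) hex
  cases hr : rk T Lab a w with
  | zero => rw [hr] at hm; exact Or.inl hm
  | succ n =>
    rw [hr] at hm
    right
    rcases hm with ⟨h1, h2⟩ | ⟨j, h1, h2⟩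
    · exact Or.inl ⟨h1, Nat.lt_succ_of_le (Nat.sInf_le h2)⟩
    · exact Or.inr ⟨j, h1, Nat.lt_succ_of_le (Nat.sInf_le h2)⟩

def Dec (T : Set Node) (Lab : Node → Θ) (z : TF Θ) (p p' : Node × St z) : Prop :=
  sizeOf p'.2.1 < sizeOf p.2.1 ∨ (p'.2 = p.2 ∧ ((∃ a, p.2.1 = al a) ∨
    ∃ a, p.2.1 = ev a ∧ rk T Lab a p'.1 < rk T Lab a p.1))

def Good (T : Set Node) (Lab : Node → Θ) (z : TF Θ) (p : Node × St z) : Prop :=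
  p.1 ∈ T ∧ p.2.1.sem T Lab p.1

theorem fwd {T : Set Node} (hT : IsTree T) (Lab : Node → Θ) (z : TF Θ) (p : Node × St z)
    (hp : Good T Lab z p) :
    ∃ S : Set (Node × St z), S.Finite ∧ (∀ p' ∈ S, Good T Lab z p' ∧ Dec T Lab z p p') ∧
      (((aut z).δ p.2 (Lab p.1)).eval (vof T p.1 S)) := by
  obtain ⟨w, c, hc⟩ := p
  obtain ⟨hw, hs⟩ := hp
  have hpar : w.dropLast ∈ T := hT.2.1 _ hw _ (List.dropLast_prefix w)
  have hfin : ∀ q : St z, {p' : Node × St z | ∃ j : ℕ+, w ++ [j] ∈ T ∧ p' = (w ++ [j], q)}.Finite := by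
    intro q
    refine ((hT.2.2 w hw).image (fun j => ((w ++ [j], q) : Node × St z))).subset ?_
    rintro p' ⟨j, hj, rfl⟩
    exact ⟨j, hj, rfl⟩
  have hsub := sub_trans z hc
  cases c with
  | lit p =>
    refine ⟨∅, Set.finite_empty, by simp, ?_⟩
    have : p (Lab w) := hs
    simp [aut, dl, this, PosBool.eval]
  | cj a b =>
    have ha : a ∈ z.sub := hsub (Or.inr (Or.inl a.self_mem))
    have hb : b ∈ z.sub := hsub (Or.inr (Or.inr b.self_mem))
    refine ⟨{(w, ⟨a, ha⟩), (w, ⟨b, hb⟩)}, by simp, ?_, ?_⟩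
    · rintro p' (rfl | rfl)
      · exact ⟨⟨hw, hs.1⟩, Or.inl (by simp; omega)⟩
      · exact ⟨⟨hw, hs.2⟩, Or.inl (by simp)⟩
    · simp [aut, dl, PosBool.eval, vof, cst_eq ha, cst_eq hb]
  | dj a b =>
    have ha : a ∈ z.sub := hsub (Or.inr (Or.inl a.self_mem))
    have hb : b ∈ z.sub := hsub (Or.inr (Or.inr b.self_mem))
    rcases hs with hs | hs
    · refine ⟨{(w, ⟨a, ha⟩)}, by simp, ?_, ?_⟩
      · rintro p' rfl
        exact ⟨⟨hw, hs⟩, Or.inl (by simp; omega)⟩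
      · simp [aut, dl, PosBool.eval, vof, cst_eq ha]
    · refine ⟨{(w, ⟨b, hb⟩)}, by simp, ?_, ?_⟩
      · rintro p' rfl
        exact ⟨⟨hw, hs⟩, Or.inl (by simp)⟩
      · simp [aut, dl, PosBool.eval, vof, cst_eq hb]
  | up a =>
    have ha : a ∈ z.sub := hsub (Or.inr a.self_mem)
    refine ⟨{(w.dropLast, ⟨a, ha⟩)}, by simp, ?_, ?_⟩
    · rintro p' rfl
      exact ⟨⟨hpar, hs.2⟩, Or.inl (by simp)⟩
    · simp [aut, dl, PosBool.eval, vof, cst_eq ha, hs.1]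
  | upo a =>
    have ha : a ∈ z.sub := hsub (Or.inr a.self_mem)
    rcases hs with hs | hs
    · refine ⟨∅, by simp, by simp, ?_⟩
      exact Or.inl hs
    · refine ⟨{(w.dropLast, ⟨a, ha⟩)}, by simp, ?_, ?_⟩
      · rintro p' rfl
        exact ⟨⟨hpar, hs⟩, Or.inl (by simp)⟩
      · simp [aut, dl, PosBool.eval, vof, cst_eq ha]
  | dia a =>
    have ha : a ∈ z.sub := hsub (Or.inr a.self_mem)
    obtain ⟨j, hj, hs⟩ := hs
    refine ⟨{(w ++ [j], ⟨a, ha⟩)}, by simp, ?_, ?_⟩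
    · rintro p' rfl
      exact ⟨⟨hj, hs⟩, Or.inl (by simp)⟩
    · simp only [aut, dl, PosBool.eval, vof, cst_eq ha]
      exact ⟨j, hj, rfl⟩
  | box a =>
    have ha : a ∈ z.sub := hsub (Or.inr a.self_mem)
    refine ⟨_, hfin ⟨a, ha⟩, ?_, ?_⟩
    · rintro p' ⟨j, hj, rfl⟩
      exact ⟨⟨hj, hs j hj⟩, Or.inl (by simp)⟩
    · simp only [aut, dl, PosBool.eval, vof, cst_eq ha]
      exact fun j hj => ⟨j, hj, rfl⟩
  | ev a =>
    have ha : a ∈ z.sub := hsub (Or.inr a.self_mem)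
    rcases ev_step hT Lab a hw hs with h | ⟨h1, h2⟩ | ⟨j, h1, h2⟩
    · refine ⟨{(w, ⟨a, ha⟩)}, by simp, ?_, ?_⟩
      · rintro p' rfl
        exact ⟨⟨hw, h⟩, Or.inl (by simp)⟩
      · simp [aut, dl, PosBool.eval, vof, cst_eq ha]
    · refine ⟨{(w.dropLast, ⟨ev a, hc⟩)}, by simp, ?_, ?_⟩
      · rintro p' rfl
        exact ⟨⟨hpar, hs⟩, Or.inr ⟨rfl, Or.inr ⟨a, rfl, h2⟩⟩⟩
      · simp only [aut, dl, PosBool.eval, vof, cst_eq hc]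
        exact Or.inr (Or.inl ⟨h1, rfl⟩)
    · refine ⟨{(w ++ [j], ⟨ev a, hc⟩)}, by simp, ?_, ?_⟩
      · rintro p' rfl
        exact ⟨⟨h1, hs⟩, Or.inr ⟨rfl, Or.inr ⟨a, rfl, h2⟩⟩⟩
      · simp only [aut, dl, PosBool.eval, vof, cst_eq hc]
        exact Or.inr (Or.inr ⟨j, h1, rfl⟩)
  | al a =>
    have ha : a ∈ z.sub := hsub (Or.inr a.self_mem)
    refine ⟨insert (w, ⟨a, ha⟩) (insert (w.dropLast, ⟨al a, hc⟩) _),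
      ((hfin ⟨al a, hc⟩).insert _).insert _, ?_, ?_⟩
    · rintro p' (rfl | rfl | ⟨j, hj, rfl⟩)
      · exact ⟨⟨hw, hs w hw⟩, Or.inl (by simp)⟩
      · exact ⟨⟨hpar, hs⟩, Or.inr ⟨rfl, Or.inl ⟨a, rfl⟩⟩⟩
      · exact ⟨⟨hj, hs⟩, Or.inr ⟨rfl, Or.inl ⟨a, rfl⟩⟩⟩
    · simp only [aut, dl, PosBool.eval, vof, cst_eq hc, cst_eq ha]
      exact ⟨Or.inl rfl, Or.inr (Or.inr (Or.inl rfl)),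
        fun j hj => Or.inr (Or.inr ⟨j, hj, rfl⟩)⟩

theorem path_acc {T : Set Node} (Lab : Node → Θ) (z : TF Θ) (s : ℕ → Node × St z)
    (hs : ∀ n, Dec T Lab z (s n) (s (n + 1))) :
    ParityAcc (aut z).prio (fun n => (s n).2) := by
  let g : ℕ → ℕ := fun n => sizeOf (s n).2.1
  have hg : Antitone g := by
    refine antitone_nat_of_succ_le fun n => ?_
    rcases hs n with h | ⟨h, _⟩
    · exact h.le
    · simp only [g, h]; exact le_rfl
  obtain ⟨N, hN⟩ : ∃ N, ∀ n, N ≤ n → g n = g N := by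
    obtain ⟨N, hN⟩ : ∃ N, g N = sInf (Set.range g) :=
      Nat.sInf_mem (Set.range_nonempty g)
    refine ⟨N, fun n hn => le_antisymm (hg hn) ?_⟩
    rw [hN]
    exact Nat.sInf_le ⟨n, rfl⟩
  have hst : ∀ n, N ≤ n → (s (n + 1)).2 = (s n).2 ∧ ((∃ a, (s n).2.1 = al a) ∨
    ∃ a, (s n).2.1 = ev a ∧ rk T Lab a (s (n + 1)).1 < rk T Lab a (s n).1) := by
    intro n hn
    rcases hs n with h | h
    · have h1 : g (n + 1) < g n := h
      rw [hN n hn, hN (n + 1) (by omega)] at h1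
      omega
    · exact h
  have hcst : ∀ k, (s (N + k)).2 = (s N).2 := by
    intro k
    induction k with
    | zero => rfl
    | succ k ih => rw [← ih]; exact (hst (N + k) (by omega)).1
  have hal : ∃ a, (s N).2.1 = al a := by
    rcases (hst N le_rfl).2 with h | ⟨a, ha, _⟩
    · exact h
    · exfalso
      have hlt : ∀ k, rk T Lab a (s (N + k)).1 + k ≤ rk T Lab a (s N).1 := by
        intro k
        induction k with
        | zero => simp
        | succ k ih =>
          rcases (hst (N + k) (by omega)).2 with ⟨b, hb⟩ | ⟨b, hb, hr⟩
          · rw [hcst, ha] at hb; cases hb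
          · rw [hcst, ha] at hb
            cases hb
            have : N + (k + 1) = N + k + 1 := by omega
            rw [this]
            omega
      have := hlt (rk T Lab a (s N).1 + 1)
      omega
  obtain ⟨a, ha⟩ := hal
  have hpr : ∀ n, N ≤ n → (aut z).prio (s n).2 = 0 := by
    intro n hn
    obtain ⟨k, rfl⟩ := Nat.exists_eq_add_of_le hn
    simp only [aut, hcst, ha, pr]
  refine ⟨0, Even.zero, ?_, ?_⟩
  · exact (Set.Ici_infinite N).mono fun n hn => hpr n hn
  · intro m' hm'
    refine (Set.finite_Iio N).subset fun n hn => ?_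
    by_contra hlt
    have h1 := hpr n (not_lt.1 hlt)
    have h2 : (aut z).prio (s n).2 = m' := hn
    omega

theorem acc_of_sem {T : Set Node} (hT : IsTree T) (Lab : Node → Θ) (z : TF Θ)
    (h : z.sem T Lab []) : Accepts (aut z) T Lab := by
  classical
  have hnil : ([] : Node) ∈ T := by
    obtain ⟨w, hw⟩ := hT.1
    exact hT.2.1 w hw _ List.nil_prefix
  choose! S hSf hSd hSe using fwd hT Lab z
  let succ : Node × St z → List (Node × St z) := fun p =>
    if hp : Good T Lab z p then (hSf p hp).toFinset.toList else []
  have hsucc : ∀ p, Good T Lab z p → ∀ p', p' ∈ succ p ↔ p' ∈ S p := by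
    intro p hp p'
    simp [succ, hp]
  obtain ⟨Tr, r, h1, h2, h3, h4⟩ := build_run succ (([], (aut z).init) : Node × St z)
  have hgood : ∀ y ∈ Tr, Good T Lab z (r y) := by
    intro y
    induction y using List.reverseRecOn with
    | nil => intro _; rw [h2]; exact ⟨hnil, h⟩
    | append_singleton l a ih =>
      intro hy
      obtain ⟨h5, h6⟩ := h4 l a hy
      rw [hsucc _ (ih h5)] at h6
      exact (hSd _ (ih h5) _ h6).1
  refine ⟨Tr, r, ⟨h1, h2, fun y hy => (hgood y hy).1, ?_⟩, ?_⟩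
  · intro y hy
    have hg := hgood y hy
    have hch : ∀ p ∈ S (r y), ∃ i : ℕ+, y ++ [i] ∈ Tr ∧ r (y ++ [i]) = p :=
      fun p hp => h3 y hy p ((hsucc _ hg _).2 hp)
    refine ⟨_, hSe _ hg, ?_, ?_, ?_, ?_, ?_⟩
    · exact fun p hp => hch _ hp
    · exact fun p hp => ⟨hp.1, hch _ hp.2⟩
    · exact fun p hp => hp.imp id (hch _)
    · rintro p ⟨j, hj, hp⟩
      exact ⟨j, hj, hch _ hp⟩
    · exact fun p hp j hj => hch _ (hp j hj)
  · intro π hπ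
    refine path_acc (T := T) Lab z (fun n => r (π n)) ?_
    intro n
    obtain ⟨h5, i, h6⟩ := hπ.2 n
    rw [h6] at h5
    obtain ⟨h7, h8⟩ := h4 _ _ h5
    show Dec T Lab z (r (π n)) (r (π (n + 1)))
    rw [h6]
    rw [hsucc _ (hgood _ h7)] at h8
    exact (hSd _ (hgood _ h7) _ h8).2

theorem sem_of_run {T : Set Node} (hT : IsTree T) (Lab : Node → Θ) (z : TF Θ)
    {Tr : Set Node} {r : Node → Node × St z} (hr : IsRun (aut z) T Lab Tr r)
    (hacc : ∀ π : ℕ → Node, IsRunPath Tr π → ParityAcc (aut z).prio (fun n => (r (π n)).2))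
    (c : TF Θ) : ∀ y ∈ Tr, (r y).2.1 = c → c.sem T Lab (r y).1 := by
  have hstep : ∀ y ∈ Tr, (dl z (r y).2.1 (Lab (r y).1)).eval
      (vof T (r y).1 {p | ∃ i : ℕ+, y ++ [i] ∈ Tr ∧ r (y ++ [i]) = p}) := by
    intro y hy
    obtain ⟨v, hv, h1, h2, h3, h4, h5⟩ := hr.step y hy
    refine eval_mono ?_ _ hv
    intro a ha
    cases a with
    | here p => exact h1 p ha
    | up p => exact h2 p ha
    | upOpt p => exact h3 p ha
    | dia p => exact h4 p ha
    | box p => exact h5 p ha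
  have hsub : ∀ y c, (r y).2.1 = c → c.sub ⊆ z.sub :=
    fun y c h => sub_trans z (h ▸ (r y).2.2)
  induction c with
  | lit p =>
    intro y hy he
    have h := hstep y hy
    rw [he] at h
    simp only [dl] at h
    by_contra hn
    have hn' : ¬ p (Lab (r y).1) := hn
    simp [hn', PosBool.eval] at h
  | cj a b iha ihb =>
    intro y hy he
    have h := hstep y hy
    rw [he] at h
    have ha : a ∈ z.sub := hsub y _ he (Or.inr (Or.inl a.self_mem))
    have hb : b ∈ z.sub := hsub y _ he (Or.inr (Or.inr b.self_mem))
    simp only [dl, PosBool.eval, vof, cst_eq ha, cst_eq hb] at h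
    obtain ⟨⟨i, hi, hi'⟩, ⟨j, hj, hj'⟩⟩ := h
    have h1 := iha _ hi (by rw [hi'])
    have h2 := ihb _ hj (by rw [hj'])
    rw [hi'] at h1
    rw [hj'] at h2
    exact ⟨h1, h2⟩
  | dj a b iha ihb =>
    intro y hy he
    have h := hstep y hy
    rw [he] at h
    have ha : a ∈ z.sub := hsub y _ he (Or.inr (Or.inl a.self_mem))
    have hb : b ∈ z.sub := hsub y _ he (Or.inr (Or.inr b.self_mem))
    simp only [dl, PosBool.eval, vof, cst_eq ha, cst_eq hb] at h
    rcases h with ⟨i, hi, hi'⟩ | ⟨j, hj, hj'⟩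
    · have h1 := iha _ hi (by rw [hi'])
      rw [hi'] at h1
      exact Or.inl h1
    · have h2 := ihb _ hj (by rw [hj'])
      rw [hj'] at h2
      exact Or.inr h2
  | up a ih =>
    intro y hy he
    have h := hstep y hy
    rw [he] at h
    have ha : a ∈ z.sub := hsub y _ he (Or.inr a.self_mem)
    simp only [dl, PosBool.eval, vof, cst_eq ha] at h
    obtain ⟨h0, i, hi, hi'⟩ := h
    have h1 := ih _ hi (by rw [hi'])
    rw [hi'] at h1
    exact ⟨h0, h1⟩
  | upo a ih =>
    intro y hy he
    have h := hstep y hy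
    rw [he] at h
    have ha : a ∈ z.sub := hsub y _ he (Or.inr a.self_mem)
    simp only [dl, PosBool.eval, vof, cst_eq ha] at h
    rcases h with h0 | ⟨i, hi, hi'⟩
    · exact Or.inl h0
    have h1 := ih _ hi (by rw [hi'])
    rw [hi'] at h1
    exact Or.inr h1
  | dia a ih =>
    intro y hy he
    have h := hstep y hy
    rw [he] at h
    have ha : a ∈ z.sub := hsub y _ he (Or.inr a.self_mem)
    simp only [dl, PosBool.eval, vof, cst_eq ha] at h
    obtain ⟨j, hj, i, hi, hi'⟩ := h
    have h1 := ih _ hi (by rw [hi'])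
    rw [hi'] at h1
    exact ⟨j, hj, h1⟩
  | box a ih =>
    intro y hy he
    have h := hstep y hy
    rw [he] at h
    have ha : a ∈ z.sub := hsub y _ he (Or.inr a.self_mem)
    simp only [dl, PosBool.eval, vof, cst_eq ha] at h
    intro j hj
    obtain ⟨i, hi, hi'⟩ := h j hj
    have h1 := ih _ hi (by rw [hi'])
    rw [hi'] at h1
    exact h1
  | al a ih =>
    intro y hy he
    have hc : al a ∈ z.sub := hsub y _ he (al a).self_mem
    have ha : a ∈ z.sub := hsub y _ he (Or.inr a.self_mem)
    have hall := tree_conn hT (fun w => ∃ y ∈ Tr, r y = (w, ⟨al a, hc⟩)) (hr.inT y hy)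
      ⟨y, hy, Prod.ext rfl (Subtype.ext he)⟩ ?_ ?_
    · intro d hd
      obtain ⟨y', hy', he'⟩ := hall d hd
      have h := hstep y' hy'
      simp only [he', dl, PosBool.eval, vof, cst_eq ha] at h
      obtain ⟨i, hi, hi'⟩ := h.1
      have h1 := ih _ hi (by rw [hi'])
      rw [hi'] at h1
      exact h1
    · rintro w i hi ⟨y', hy', he'⟩
      have h := hstep y' hy'
      simp only [he', dl, PosBool.eval, vof, cst_eq hc] at h
      rcases h.2.1 with h1 | ⟨k, hk, hk'⟩
      · simp at h1
      · exact ⟨_, hk, by simpa using hk'⟩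
    · rintro w i hi ⟨y', hy', he'⟩
      have h := hstep y' hy'
      simp only [he', dl, PosBool.eval, vof, cst_eq hc] at h
      obtain ⟨k, hk, hk'⟩ := h.2.2 i hi
      exact ⟨_, hk, hk'⟩
  | ev a ih =>
    intro y hy he
    have hc : ev a ∈ z.sub := hsub y _ he (ev a).self_mem
    have ha : a ∈ z.sub := hsub y _ he (Or.inr a.self_mem)
    by_contra hno
    have hnext : ∀ y', y' ∈ Tr ∧ (r y').2.1 = ev a →
        ∃ i : ℕ+, y' ++ [i] ∈ Tr ∧ (r (y' ++ [i])).2.1 = ev a := by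
      rintro y' ⟨hy', he'⟩
      have h := hstep y' hy'
      rw [he'] at h
      simp only [dl, PosBool.eval, vof, cst_eq ha, cst_eq hc] at h
      rcases h with ⟨i, hi, hi'⟩ | ⟨_, i, hi, hi'⟩ | ⟨j, hj, i, hi, hi'⟩
      · have h1 := ih _ hi (by rw [hi'])
        exact (hno ⟨_, hr.inT _ hi, h1⟩).elim
      · exact ⟨i, hi, by rw [hi']⟩
      · exact ⟨i, hi, by rw [hi']⟩
    choose! g hg1 hg2 using hnext
    let G : Node → Node := fun y' => y' ++ [g y']
    have hG : ∀ k, G^[k] y ∈ Tr ∧ (r (G^[k] y)).2.1 = ev a := by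
      intro k
      induction k with
      | zero => exact ⟨hy, he⟩
      | succ k ihk =>
        rw [Function.iterate_succ_apply']
        exact ⟨hg1 _ ihk, hg2 _ ihk⟩
    let π : ℕ → Node := fun n => if n ≤ y.length then y.take n else G^[n - y.length] y
    have hπ2 : ∀ n, y.length ≤ n → π n = G^[n - y.length] y := by
      intro n hn
      by_cases h : n ≤ y.length
      · have : n = y.length := le_antisymm h hn
        subst this
        simp [π]
      · simp [π, h]
    have hpath : IsRunPath Tr π := by
      refine ⟨by simp [π], fun n => ?_⟩
      by_cases hn : n + 1 ≤ y.length
      · have e1 : π (n + 1) = y.take (n + 1) := by simp only [π, hn, if_true]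
        have e2 : π n = y.take n := by
          have : n ≤ y.length := by omega
          simp only [π, this, if_true]
        rw [e1, e2]
        refine ⟨hr.tree.2.1 y hy _ (List.take_prefix _ _), y[n], ?_⟩
        rw [List.take_add_one, List.getElem?_eq_getElem (by omega)]
        rfl
      · rw [hπ2 n (by omega), hπ2 (n + 1) (by omega)]
        have : n + 1 - y.length = (n - y.length) + 1 := by omega
        rw [this]
        refine ⟨(hG _).1, ?_⟩
        rw [Function.iterate_succ_apply']
        exact ⟨_, rfl⟩
    obtain ⟨m, hm, hinf, _⟩ := hacc π hpath
    refine hinf ((Set.finite_Iio y.length).subset fun n hn => ?_)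
    by_contra hlt
    have h1 : (aut z).prio (r (π n)).2 = 1 := by
      simp only [aut, hπ2 n (not_lt.1 hlt), (hG _).2, pr]
    have h2 : (aut z).prio (r (π n)).2 = m := hn
    rw [h1] at h2
    rw [← h2] at hm
    exact absurd hm (by decide)

theorem accepts_iff {T : Set Node} (hT : IsTree T) (Lab : Node → Θ) (z : TF Θ) :
    Accepts (aut z) T Lab ↔ z.sem T Lab [] := by
  constructor
  · rintro ⟨Tr, r, hr, hacc⟩
    have hnil : ([] : Node) ∈ Tr := by
      obtain ⟨w, hw⟩ := hr.tree.1
      exact hr.tree.2.1 w hw _ List.nil_prefix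
    have := sem_of_run hT Lab z hr hacc z [] hnil (by rw [hr.root]; rfl)
    rwa [hr.root] at this
  · exact acc_of_sem hT Lab z

end TF

/-! Translation of GF² into the modal logic. -/

theorem sat_congr {U B : Type} (A : Str U B) (φ : Fml U B) :
    ∀ σ σ' : Var → A.Dom, (∀ v ∈ φ.free, σ v = σ' v) → (Sat A φ σ ↔ Sat A φ σ') := by
  induction φ with
  | uatom P v => intro σ σ' h; simp only [Sat, h v (by simp [Fml.free])]
  | batom R v w =>
    intro σ σ' h
    simp only [Sat, h v (by simp [Fml.free]), h w (by simp [Fml.free])]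
  | eqv v w =>
    intro σ σ' h
    simp only [Sat, h v (by simp [Fml.free]), h w (by simp [Fml.free])]
  | fls => intro σ σ' h; rfl
  | neg φ ih => intro σ σ' h; simp only [Sat, ih σ σ' h]
  | conj φ ψ ih1 ih2 | disj φ ψ ih1 ih2 | impl φ ψ ih1 ih2 =>
    intro σ σ' h
    simp only [Sat, ih1 σ σ' (fun v hv => h v (Or.inl hv)),
      ih2 σ σ' (fun v hv => h v (Or.inr hv))]
  | all v φ ih =>
    intro σ σ' h
    refine forall_congr' fun d => ih _ _ fun u hu => ?_
    by_cases e : u = v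
    · simp [upd, e]
    · simp only [upd, e, if_false]; exact h u ⟨hu, e⟩
  | ex v φ ih =>
    intro σ σ' h
    refine exists_congr fun d => ih _ _ fun u hu => ?_
    by_cases e : u = v
    · simp [upd, e]
    · simp only [upd, e, if_false]; exact h u ⟨hu, e⟩

/-- mode `none`: both variables denote `w`; mode `some c`: the variable `c` denotes `w` and the
other variable denotes the predecessor of `w` -/
def Rep {D : Set Node} : Option Var → Node → (Var → {w : Node // w ∈ D}) → Prop
  | none, w, σ => ∀ u, (σ u).val = w
  | some c, w, σ => ∃ (p : Node) (i : ℕ+), w = p ++ [i] ∧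
      ∀ u, (σ u).val = if u = c then w else p

def Tr1 {U B : Type} (SU : Set U) (SB : Set B) (φ : Fml U B) (m : Option Var)
    (z : TF (TypeAlph U B SU SB)) : Prop :=
  ∀ (T : Set Node) (hT : IsTree T) (Lab : Node → TypeAlph U B SU SB) (w : Node)
    (σ : Var → {w : Node // w ∈ T}), Rep m w σ →
    (z.sem T Lab w ↔ Sat (mkStr SU SB T hT Lab) φ σ)

def Trs {U B : Type} (SU : Set U) (SB : Set B) (φ : Fml U B) : Prop :=
  ∀ m, ∃ z, Tr1 SU SB φ m z

section trans

variable {U B : Type} {SU : Set U} {SB : Set B}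

theorem trs_neg {φ : Fml U B} (h : Trs SU SB φ) : Trs SU SB (.neg φ) := by
  intro m
  obtain ⟨z, hz⟩ := h m
  refine ⟨z.dual, fun T hT Lab w σ hσ => ?_⟩
  rw [TF.sem_dual, hz T hT Lab w σ hσ]
  rfl

theorem trs_conj {φ ψ : Fml U B} (h : Trs SU SB φ) (h' : Trs SU SB ψ) :
    Trs SU SB (.conj φ ψ) := by
  intro m
  obtain ⟨z, hz⟩ := h m
  obtain ⟨z', hz'⟩ := h' m
  refine ⟨.cj z z', fun T hT Lab w σ hσ => ?_⟩
  simp only [TF.sem, hz T hT Lab w σ hσ, hz' T hT Lab w σ hσ, Sat]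

theorem trs_of_equiv {φ ψ : Fml U B} (h : Trs SU SB φ)
    (he : ∀ (A : Str U B) σ, Sat A ψ σ ↔ Sat A φ σ) : Trs SU SB ψ := by
  intro m
  obtain ⟨z, hz⟩ := h m
  exact ⟨z, fun T hT Lab w σ hσ => (hz T hT Lab w σ hσ).trans (he (mkStr SU SB T hT Lab) σ).symm⟩

theorem trs_fls : Trs SU SB (.fls : Fml U B) :=
  fun _ => ⟨.lit fun _ => False, fun _ _ _ _ _ _ => Iff.rfl⟩

theorem concat_ne (p : Node) (i : ℕ+) : p ++ [i] ≠ p := by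
  intro h
  have := congrArg List.length h
  simp at this

theorem concat_concat_ne (p : Node) (i j : ℕ+) : p ≠ p ++ [i] ++ [j] := by
  intro h
  have := congrArg List.length h
  simp at this

theorem trs_eqv (v w : Var) : Trs SU SB (.eqv v w : Fml U B) := by
  intro m
  cases m with
  | none =>
    refine ⟨.lit fun _ => True, fun T hT Lab n σ hσ => ?_⟩
    have : σ v = σ w := Subtype.ext ((hσ v).trans (hσ w).symm)
    exact iff_of_true trivial this
  | some c =>
    by_cases e : v = w
    · subst e
      exact ⟨.lit fun _ => True, fun T hT Lab n σ hσ => iff_of_true trivial rfl⟩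
    · refine ⟨.lit fun _ => False, fun T hT Lab n σ hσ => iff_of_false id ?_⟩
      obtain ⟨p, i, rfl, h⟩ := hσ
      intro (hh : σ v = σ w)
      have h1 := congrArg Subtype.val hh
      rw [h, h] at h1
      cases v <;> cases w <;> cases c <;> simp_all

theorem trs_uatom (P : U) (v : Var) : Trs SU SB (.uatom P v : Fml U B) := by
  let z : TF (TypeAlph U B SU SB) := .lit fun t => Atom2.ua P Var.y ∈ t.1.val
  intro m
  cases m with
  | none =>
    refine ⟨z, fun T hT Lab n σ hσ => ?_⟩
    simp only [z, TF.sem, Sat, mkStr, hσ v]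
  | some c =>
    by_cases e : v = c
    · refine ⟨z, fun T hT Lab n σ hσ => ?_⟩
      obtain ⟨p, i, rfl, h⟩ := hσ
      have h1 := h v
      rw [if_pos e] at h1
      simp only [z, TF.sem, Sat, mkStr, h1]
    · refine ⟨.up z, fun T hT Lab n σ hσ => ?_⟩
      obtain ⟨p, i, rfl, h⟩ := hσ
      simp [z, TF.sem, Sat, mkStr, h v, e]

theorem trs_batom (R : B) (v w : Var) : Trs SU SB (.batom R v w : Fml U B) := by
  let z : Var → Var → TF (TypeAlph U B SU SB) := fun a b =>
    .lit fun t => Atom2.ba R a b ∈ t.1.val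
  have self : ∀ (T : Set Node) (hT : IsTree T) (Lab : Node → TypeAlph U B SU SB)
      (σ : Var → {w : Node // w ∈ T}) (n : Node), (σ v).val = n → (σ w).val = n →
      ((z .y .y).sem T Lab n ↔ Sat (mkStr SU SB T hT Lab) (.batom R v w) σ) := by
    intro T hT Lab σ n h1 h2
    have e : σ v = σ w := Subtype.ext (h1.trans h2.symm)
    simp only [z, TF.sem, Sat, mkStr, e, h2, true_and]
    constructor
    · exact Or.inl
    · rintro (h | ⟨⟨i, h⟩, _⟩ | ⟨⟨i, h⟩, _⟩)
      · exact h
      · exact (concat_ne _ _ h.symm).elim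
      · exact (concat_ne _ _ h.symm).elim
  intro m
  cases m with
  | none => exact ⟨z .y .y, fun T hT Lab n σ hσ => self T hT Lab σ n (hσ v) (hσ w)⟩
  | some c =>
    by_cases e : v = w
    · subst e
      by_cases e' : v = c
      · refine ⟨z .y .y, fun T hT Lab n σ hσ => ?_⟩
        obtain ⟨p, i, rfl, h⟩ := hσ
        have := h v
        rw [if_pos e'] at this
        exact self T hT Lab σ _ this this
      · refine ⟨.up (z .y .y), fun T hT Lab n σ hσ => ?_⟩
        obtain ⟨p, i, rfl, h⟩ := hσ
        have := h v
        rw [if_neg e'] at this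
        rw [← self T hT Lab σ _ this this]
        simp [TF.sem]
    · by_cases e' : v = c
      · refine ⟨z .y .x, fun T hT Lab n σ hσ => ?_⟩
        obtain ⟨p, i, rfl, h⟩ := hσ
        have h1 := h v
        have h2 := h w
        rw [if_pos e'] at h1
        rw [if_neg (by rw [← e']; exact fun h => e h.symm)] at h2
        simp only [z, TF.sem, Sat, mkStr, Subtype.ext_iff, h1, h2]
        constructor
        · exact fun h => Or.inr (Or.inr ⟨⟨i, rfl⟩, h⟩)
        · rintro (⟨h, _⟩ | ⟨⟨j, h⟩, _⟩ | ⟨_, h⟩)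
          · exact (concat_ne _ _ h).elim
          · exact (concat_concat_ne _ _ _ h).elim
          · exact h
      · have e2 : w = c := by cases v <;> cases w <;> cases c <;> simp_all
        refine ⟨z .x .y, fun T hT Lab n σ hσ => ?_⟩
        obtain ⟨p, i, rfl, h⟩ := hσ
        have h1 := h v
        have h2 := h w
        rw [if_neg e'] at h1
        rw [if_pos e2] at h2
        simp only [z, TF.sem, Sat, mkStr, Subtype.ext_iff, h1, h2]
        constructor
        · exact fun h => Or.inr (Or.inl ⟨⟨i, rfl⟩, h⟩)
        · rintro (⟨h, _⟩ | ⟨_, h⟩ | ⟨⟨j, h⟩, _⟩)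
          · exact (concat_ne _ _ h.symm).elim
          · exact h
          · exact (concat_concat_ne _ _ _ h).elim

theorem trs_atom {α : Fml U B} (h : α.IsAtom) : Trs SU SB α := by
  cases α with
  | uatom P v => exact trs_uatom P v
  | batom R v w => exact trs_batom R v w
  | eqv v w => exact trs_eqv v w
  | _ => exact h.elim

/-- a satisfied atom containing both variables forces adjacency -/
theorem atom_adj {α : Fml U B} (ha : α.IsAtom) {u v : Var} (huv : u ≠ v) (hu : u ∈ α.free)
    (hv : v ∈ α.free) (T : Set Node) (hT : IsTree T) (Lab : Node → TypeAlph U B SU SB)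
    (σ : Var → {w : Node // w ∈ T}) (h : Sat (mkStr SU SB T hT Lab) α σ) :
    (σ u).val = (σ v).val ∨ (∃ i : ℕ+, (σ v).val = (σ u).val ++ [i]) ∨
      (∃ i : ℕ+, (σ u).val = (σ v).val ++ [i]) := by
  cases α with
  | uatom P a =>
    simp only [Fml.free, Set.mem_singleton_iff] at hu hv
    exact (huv (hu.trans hv.symm)).elim
  | batom R a b =>
    simp only [Fml.free, Set.mem_insert_iff, Set.mem_singleton_iff] at hu hv
    simp only [Sat, mkStr, Subtype.ext_iff] at h
    rcases hu with rfl | rfl <;> rcases hv with rfl | rfl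
    · exact (huv rfl).elim
    · rcases h with ⟨h, _⟩ | ⟨h, _⟩ | ⟨h, _⟩
      · exact Or.inl h
      · exact Or.inr (Or.inl h)
      · exact Or.inr (Or.inr h)
    · rcases h with ⟨h, _⟩ | ⟨h, _⟩ | ⟨h, _⟩
      · exact Or.inl h.symm
      · exact Or.inr (Or.inr h)
      · exact Or.inr (Or.inl h)
    · exact (huv rfl).elim
  | eqv a b =>
    simp only [Fml.free, Set.mem_insert_iff, Set.mem_singleton_iff] at hu hv
    simp only [Sat] at h
    rcases hu with rfl | rfl <;> rcases hv with rfl | rfl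
    · exact (huv rfl).elim
    · exact Or.inl (congrArg Subtype.val h)
    · exact Or.inl (congrArg Subtype.val h.symm)
    · exact (huv rfl).elim
  | _ => exact ha.elim

theorem var_cases {u v : Var} (huv : u ≠ v) (a : Var) : a = u ∨ a = v := by
  cases u <;> cases v <;> cases a <;> simp_all

theorem trs_ex {v : Var} {α φ : Fml U B} (ha : α.IsAtom) (hφ : Trs SU SB φ)
    (hf : φ.free ∪ {v} ⊆ α.free) : Trs SU SB (.ex v (.conj α φ)) := by
  have hc : Trs SU SB (.conj α φ) := trs_conj (trs_atom ha) hφ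
  obtain ⟨u, huv⟩ : ∃ u, u ≠ v := by
    cases v
    · exact ⟨.y, by simp⟩
    · exact ⟨.x, by simp⟩
  have hv : v ∈ α.free := hf (Or.inr rfl)
  obtain ⟨z0, hz0⟩ := hc none
  by_cases hu : u ∈ α.free
  · obtain ⟨z1, hz1⟩ := hc (some v)
    obtain ⟨z2, hz2⟩ := hc (some u)
    let z : TF (TypeAlph U B SU SB) :=
      .dj z0 (.dj (.dia z1) (.cj (.up (.lit fun _ => True)) z2))
    have key : ∀ (T : Set Node) (hT : IsTree T) (Lab : Node → TypeAlph U B SU SB)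
        (σ : Var → {w : Node // w ∈ T}),
        (z.sem T Lab (σ u).val ↔ Sat (mkStr SU SB T hT Lab) (.ex v (.conj α φ)) σ) := by
      intro T hT Lab σ
      have r0 : ∀ d : {w : Node // w ∈ T}, d.val = (σ u).val →
          Rep none (σ u).val (upd σ v d) := by
        intro d hd a
        rcases var_cases huv a with rfl | rfl
        · simp [upd, huv]
        · simp [upd, hd]
      have r1 : ∀ (d : {w : Node // w ∈ T}) (i : ℕ+), d.val = (σ u).val ++ [i] →
          Rep (some v) ((σ u).val ++ [i]) (upd σ v d) := by
        intro d i hd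
        refine ⟨_, i, rfl, fun a => ?_⟩
        rcases var_cases huv a with rfl | rfl
        · simp [upd, huv]
        · simp [upd, hd]
      have r2 : ∀ (d : {w : Node // w ∈ T}) (i : ℕ+), (σ u).val = d.val ++ [i] →
          Rep (some u) (σ u).val (upd σ v d) := by
        intro d i hd
        refine ⟨_, i, hd, fun a => ?_⟩
        rcases var_cases huv a with rfl | rfl
        · simp [upd, huv]
        · simp [upd, huv.symm]
      constructor
      · rintro (h | ⟨i, hi, h⟩ | ⟨⟨h0, _⟩, h⟩)
        · exact ⟨σ u, (hz0 T hT Lab _ _ (r0 _ rfl)).1 h⟩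
        · exact ⟨⟨_, hi⟩, (hz1 T hT Lab _ _ (r1 ⟨_, hi⟩ i rfl)).1 h⟩
        · have hd : (σ u).val.dropLast ∈ T :=
            hT.2.1 _ (σ u).2 _ (List.dropLast_prefix _)
          exact ⟨⟨_, hd⟩, (hz2 T hT Lab _ _ (r2 ⟨_, hd⟩ ((σ u).val.getLast h0)
            (List.dropLast_append_getLast h0).symm)).1 h⟩
      · rintro ⟨(d : {w : Node // w ∈ T}), h⟩
        have := atom_adj ha huv hu hv T hT Lab (upd σ v d) h.1
        have e1 : upd σ v d u = σ u := by simp [upd, huv]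
        have e2 : upd σ v d v = d := by simp [upd]
        rw [e1, e2] at this
        rcases this with h1 | ⟨i, h1⟩ | ⟨i, h1⟩
        · exact Or.inl ((hz0 T hT Lab _ _ (r0 d h1.symm)).2 h)
        · exact Or.inr (Or.inl ⟨i, h1 ▸ d.2, (hz1 T hT Lab _ _ (r1 d i h1)).2 h⟩)
        · refine Or.inr (Or.inr ⟨⟨?_, trivial⟩, (hz2 T hT Lab _ _ (r2 d i h1)).2 h⟩)
          rw [h1]; simp
    intro m
    cases m with
    | none =>
      refine ⟨z, fun T hT Lab w σ hσ => ?_⟩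
      rw [← key, hσ u]
    | some c =>
      by_cases e : u = c
      · refine ⟨z, fun T hT Lab w σ hσ => ?_⟩
        obtain ⟨p, i, rfl, h⟩ := hσ
        rw [← key, h u, if_pos e]
      · refine ⟨.up z, fun T hT Lab w σ hσ => ?_⟩
        obtain ⟨p, i, rfl, h⟩ := hσ
        rw [← key, h u, if_neg e]
        simp [TF.sem]
  · intro m
    refine ⟨.ev z0, fun T hT Lab w σ _ => ?_⟩
    have key : ∀ d : {w : Node // w ∈ T}, z0.sem T Lab d.val ↔
        Sat (mkStr SU SB T hT Lab) (.conj α φ) (upd σ v d) := by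
      intro d
      rw [hz0 T hT Lab d.val (fun _ => d) (fun _ => rfl)]
      refine sat_congr (mkStr SU SB T hT Lab) _ _ _ fun a hm => ?_
      have hm' : a ∈ α.free := hm.elim id fun h => hf (Or.inl h)
      rcases var_cases huv a with rfl | rfl
      · exact (hu hm').elim
      · exact (if_pos rfl).symm
    constructor
    · rintro ⟨d, hd, h⟩
      exact ⟨⟨d, hd⟩, (key ⟨d, hd⟩).1 h⟩
    · rintro ⟨d, h⟩
      exact ⟨d.val, d.2, (key d).2 h⟩

theorem trs_gf {φ : Fml U B} (h : IsGF2 φ) : Trs SU SB φ := by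
  induction h with
  | uatom P v => exact trs_uatom P v
  | batom R v w => exact trs_batom R v w
  | eqv v w => exact trs_eqv v w
  | fls => exact trs_fls
  | neg _ ih => exact trs_neg ih
  | conj _ _ ih1 ih2 => exact trs_conj ih1 ih2
  | disj _ _ ih1 ih2 =>
    refine trs_of_equiv (trs_neg (trs_conj (trs_neg ih1) (trs_neg ih2))) fun A σ => ?_
    simp only [Sat]; tauto
  | impl _ _ ih1 ih2 =>
    refine trs_of_equiv (trs_neg (trs_conj ih1 (trs_neg ih2))) fun A σ => ?_
    simp only [Sat]; tauto
  | allG ha _ hf ih =>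
    refine trs_of_equiv (trs_neg (trs_ex ha (trs_neg ih) hf)) fun A σ => ?_
    simp only [Sat]
    push Not
    rfl
  | exG ha _ hf ih => exact trs_ex ha ih hf

end trans

/-- for every GF² sentence `φ₁` there is a 2ATA `𝒜₁` over
the alphabet of pairs (atomic 2-type for `sig φ₁`, marker bit) that accepts a
`Θ`-labeled tree `(T, L)` iff the represented structure `𝔄_{(T,L)}` is a
model of `φ₁`. -/
theorem exists_ata_recognizing_models_of_gf2_sentence
    {U B : Type} (φ₁ : Fml U B) (hgf : IsGF2 φ₁) (hsen : φ₁.IsSentence) :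
    ∃ (Q : Type) (_ : Finite Q)
      (A₁ : TA.ATA Q (TypeAlph U B φ₁.upreds φ₁.bpreds)),
      ∀ (T : Set TA.Node) (hT : TA.IsTree T)
        (Lab : TA.Node → TypeAlph U B φ₁.upreds φ₁.bpreds),
        TA.Accepts A₁ T Lab ↔ SatS (mkStr φ₁.upreds φ₁.bpreds T hT Lab) φ₁ := by
  obtain ⟨z, hz⟩ := trs_gf (SU := φ₁.upreds) (SB := φ₁.bpreds) hgf none
  refine ⟨TF.St z, z.sub_finite.to_subtype, TF.aut z, fun T hT Lab => ?_⟩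
  have hnil : ([] : Node) ∈ T := by
    obtain ⟨w, hw⟩ := hT.1
    exact hT.2.1 w hw _ List.nil_prefix
  rw [TF.accepts_iff hT, hz T hT Lab [] (fun _ => ⟨[], hnil⟩) (fun _ => rfl)]
  constructor
  · intro h σ
    refine (sat_congr (mkStr φ₁.upreds φ₁.bpreds T hT Lab) φ₁ _ _ fun v hv => ?_).1 h
    rw [show φ₁.free = ∅ from hsen] at hv
    exact hv.elim
  · exact fun h => h _

end GFC
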